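/- Let Φ = {φ_i}_{i=1}^∞ be a Riesz basis and Ψ = {ψ_i}_{i=1}^∞ a frame for a Hilbert space H. If Φ and Ψ are woven, then Ψ is a Riesz basis. -/

import Mathlib

open scoped RealInnerProductSpace BigOperators Classical

/-!
Everything takes place in the completion of `H`. A Riesz basis `φ` is minimal: no `φ i` lies in the
closed span of the others, so `φ` has a biorthogonal family `g`. Given a finitely supported `c`,
with support `s`, weave `ψ` on `s` with `φ` off `s`. The `|s|` independent vectors `g j`, `j ∈ s`,
are orthogonal to every `φ i`, `i ∉ s`, and a frame has no nonzero vector orthogonal to all its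
elements; so taking inner products with `ψ i`, `i ∈ s`, is injective on their span, hence onto
`𝕜 ^ s`. Thus `c` consists of the coefficients of some `x` with respect to the woven frame, and
Cauchy–Schwarz turns the lower frame bound at `x` into the lower Riesz bound of `ψ` at `c`.
-/

section Minimal

/-- A family is minimal if no member lies in the closed linear span of the others. -/
def IsMinimalFamily (𝕜 : Type*) {ι E : Type*} [Semiring 𝕜] [AddCommMonoid E] [Module 𝕜 E]
    [TopologicalSpace E] (f : ι → E) : Prop :=
  ∀ i, f i ∉ closure (Submodule.span 𝕜 (f '' {i}ᶜ) : Set E)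

theorem IsMinimalFamily.map_of_isInducing {𝕜 ι E F : Type*} [Semiring 𝕜]
    [AddCommMonoid E] [Module 𝕜 E] [TopologicalSpace E]
    [AddCommMonoid F] [Module 𝕜 F] [TopologicalSpace F]
    {f : ι → E} (hf : IsMinimalFamily 𝕜 f) {j : E →ₗ[𝕜] F} (hj : Topology.IsInducing j) :
    IsMinimalFamily 𝕜 (j ∘ f) := by
  intro i hi
  apply hf i
  rwa [hj.closure_eq_preimage_closure_image, Set.mem_preimage, ← Submodule.map_coe,
    Submodule.map_span, ← Set.image_comp]

theorem isMinimalFamily_of_le_norm_linearCombination_sq {𝕜 ι E : Type*} [NormedField 𝕜]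
    [SeminormedAddCommGroup E] [NormedSpace 𝕜 E] {A : ℝ} (hA : 0 < A) {f : ι → E}
    (hf : ∀ c : ι →₀ 𝕜, A * ∑ i ∈ c.support, ‖c i‖ ^ 2 ≤ ‖Finsupp.linearCombination 𝕜 f c‖ ^ 2) :
    IsMinimalFamily 𝕜 f := by
  intro i hi
  have dist_lower : ∀ v ∈ Submodule.span 𝕜 (f '' {i}ᶜ), A ≤ ‖f i - v‖ ^ 2 := by
    intro v hv
    obtain ⟨l, hl, rfl⟩ := (Finsupp.mem_span_image_iff_linearCombination 𝕜).1 hv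
    have hli : l i = 0 := Finsupp.notMem_support_iff.1 fun h => hl h rfl
    let c := Finsupp.single i 1 - l
    have hci : c i = 1 := by simp [c, hli]
    have hic : i ∈ c.support := by simp [hci]
    calc A = A * ‖c i‖ ^ 2 := by simp [hci]
      _ ≤ A * ∑ k ∈ c.support, ‖c k‖ ^ 2 := by
        gcongr
        exact Finset.single_le_sum (f := fun k => ‖c k‖ ^ 2) (fun k _ => sq_nonneg _) hic
      _ ≤ ‖Finsupp.linearCombination 𝕜 f c‖ ^ 2 := hf c
      _ = ‖f i - Finsupp.linearCombination 𝕜 f l‖ ^ 2 := by simp [c]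
  have hclosed : IsClosed {v : E | A ≤ ‖f i - v‖ ^ 2} := isClosed_le (by fun_prop) (by fun_prop)
  have : A ≤ ‖f i - f i‖ ^ 2 := closure_minimal dist_lower hclosed hi
  simp only [sub_self, norm_zero] at this
  linarith

end Minimal

section Woven

open scoped InnerProductSpace
open UniformSpace (Completion)

variable {𝕜 ι E : Type*} [RCLike 𝕜] [NormedAddCommGroup E] [InnerProductSpace 𝕜 E]
  {A B : ℝ} {f φ ψ : ι → E}

/-- `f` is a Bessel family with bound `B`. Bounding the finite partial sums, rather than the `tsum`,
makes summability part of the definition. -/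
def IsBesselWith (𝕜 : Type*) {ι E : Type*} [RCLike 𝕜] [NormedAddCommGroup E]
    [InnerProductSpace 𝕜 E] (B : ℝ) (f : ι → E) : Prop :=
  ∀ (x : E) (s : Finset ι), ∑ i ∈ s, ‖⟪f i, x⟫_𝕜‖ ^ 2 ≤ B * ‖x‖ ^ 2

/-- `f` is a frame with bounds `A` and `B`; the upper bound is the Bessel bound. -/
structure IsFrameWith (𝕜 : Type*) {ι E : Type*} [RCLike 𝕜] [NormedAddCommGroup E]
    [InnerProductSpace 𝕜 E] (A B : ℝ) (f : ι → E) : Prop where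
  pos : 0 < A
  le : A ≤ B
  lower (x : E) : A * ‖x‖ ^ 2 ≤ ∑' i, ‖⟪f i, x⟫_𝕜‖ ^ 2
  isBesselWith : IsBesselWith 𝕜 B f

/-- `φ` and `ψ` are woven with universal bounds `A` and `B`: choosing `φ i` for `i ∈ σ` and `ψ i`
for `i ∉ σ` gives a frame with these bounds, for every `σ`. -/
def IsWovenWith (𝕜 : Type*) {ι E : Type*} [RCLike 𝕜] [NormedAddCommGroup E]
    [InnerProductSpace 𝕜 E] (A B : ℝ) (φ ψ : ι → E) : Prop :=
  ∀ σ : Set ι, IsFrameWith 𝕜 A B (σ.piecewise φ ψ)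

/-- `f` is a Riesz basis with bounds `A` and `B`: finite linear combinations are comparable to the
`ℓ²` norm of their coefficients, and the linear span is dense. -/
structure IsRieszBasisWith (𝕜 : Type*) {ι E : Type*} [RCLike 𝕜] [NormedAddCommGroup E]
    [InnerProductSpace 𝕜 E] (A B : ℝ) (f : ι → E) : Prop where
  pos : 0 < A
  le : A ≤ B
  lower (c : ι →₀ 𝕜) : A * ∑ i ∈ c.support, ‖c i‖ ^ 2 ≤ ‖Finsupp.linearCombination 𝕜 f c‖ ^ 2
  upper (c : ι →₀ 𝕜) : ‖Finsupp.linearCombination 𝕜 f c‖ ^ 2 ≤ B * ∑ i ∈ c.support, ‖c i‖ ^ 2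
  dense_span : Dense (Submodule.span 𝕜 (Set.range f) : Set E)

theorem inner_linearCombination_left (f : ι → E) (c : ι →₀ 𝕜) (x : E) :
    ⟪Finsupp.linearCombination 𝕜 f c, x⟫_𝕜 = ∑ i ∈ c.support, star (c i) * ⟪f i, x⟫_𝕜 := by
  simp [Finsupp.linearCombination_apply, Finsupp.sum, sum_inner, inner_smul_left]

namespace IsBesselWith

theorem norm_linearCombination_sq_le (hB : 0 ≤ B) (hf : IsBesselWith 𝕜 B f) (c : ι →₀ 𝕜) :
    ‖Finsupp.linearCombination 𝕜 f c‖ ^ 2 ≤ B * ∑ i ∈ c.support, ‖c i‖ ^ 2 := by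
  set x := Finsupp.linearCombination 𝕜 f c
  have norm_sq_le : ‖x‖ ^ 2 ≤ ∑ i ∈ c.support, ‖c i‖ * ‖⟪f i, x⟫_𝕜‖ := by
    calc ‖x‖ ^ 2 = ‖∑ i ∈ c.support, star (c i) * ⟪f i, x⟫_𝕜‖ := by
          rw [← inner_linearCombination_left, inner_self_eq_norm_sq_to_K, norm_pow,
            norm_algebraMap', norm_norm]
      _ ≤ ∑ i ∈ c.support, ‖star (c i) * ⟪f i, x⟫_𝕜‖ := norm_sum_le _ _
      _ = ∑ i ∈ c.support, ‖c i‖ * ‖⟪f i, x⟫_𝕜‖ := by simp only [norm_mul, norm_star]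
  have norm_sq_sq_le : ‖x‖ ^ 2 * ‖x‖ ^ 2 ≤ (B * ∑ i ∈ c.support, ‖c i‖ ^ 2) * ‖x‖ ^ 2 := by
    calc ‖x‖ ^ 2 * ‖x‖ ^ 2 = (‖x‖ ^ 2) ^ 2 := by ring
      _ ≤ (∑ i ∈ c.support, ‖c i‖ * ‖⟪f i, x⟫_𝕜‖) ^ 2 := by gcongr
      _ ≤ (∑ i ∈ c.support, ‖c i‖ ^ 2) * ∑ i ∈ c.support, ‖⟪f i, x⟫_𝕜‖ ^ 2 :=
        Finset.sum_mul_sq_le_sq_mul_sq _ _ _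
      _ ≤ (∑ i ∈ c.support, ‖c i‖ ^ 2) * (B * ‖x‖ ^ 2) := by gcongr; exact hf x c.support
      _ = (B * ∑ i ∈ c.support, ‖c i‖ ^ 2) * ‖x‖ ^ 2 := by ring
  rcases (sq_nonneg ‖x‖).eq_or_lt with hx | hx
  · rw [← hx]
    positivity
  · exact le_of_mul_le_mul_right norm_sq_sq_le hx

theorem memℓp_inner (hf : IsBesselWith 𝕜 B f) (x : E) : Memℓp (fun i => ⟪f i, x⟫_𝕜) 2 :=
  memℓp_gen' (C := B * ‖x‖ ^ 2) fun s => by simpa using hf x s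

/-- The analysis operator `x ↦ (⟪f i, x⟫)ᵢ` of a Bessel family, with values in `ℓ²`. -/
noncomputable def analysis (hf : IsBesselWith 𝕜 B f) : E →L[𝕜] lp (fun _ : ι => 𝕜) 2 :=
  LinearMap.mkContinuous
    { toFun x := ⟨fun i => ⟪f i, x⟫_𝕜, hf.memℓp_inner x⟩
      map_add' x y := Subtype.ext <| funext fun i => inner_add_right (f i) x y
      map_smul' a x := Subtype.ext <| funext fun i => inner_smul_right (f i) x a }
    √B fun x => lp.norm_le_of_forall_sum_le (by simp) (by positivity) fun s => by
      have sq_eq : (√B * ‖x‖) ^ 2 = B * ‖x‖ ^ 2 := by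
        rw [← Real.sqrt_sq (norm_nonneg x), ← Real.sqrt_mul' B (sq_nonneg ‖x‖),
          Real.sq_sqrt (by simpa using hf x ∅), Real.sqrt_sq (norm_nonneg x)]
      simpa [sq_eq] using hf x s

@[simp]
theorem analysis_apply (hf : IsBesselWith 𝕜 B f) (x : E) (i : ι) :
    hf.analysis x i = ⟪f i, x⟫_𝕜 :=
  rfl

theorem norm_analysis_sq (hf : IsBesselWith 𝕜 B f) (x : E) :
    ‖hf.analysis x‖ ^ 2 = ∑' i, ‖⟪f i, x⟫_𝕜‖ ^ 2 := by
  simpa using lp.norm_rpow_eq_tsum (p := 2) (by simp) (hf.analysis x)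

theorem completion (hf : IsBesselWith 𝕜 B f) : IsBesselWith 𝕜 B fun i => (f i : Completion E) := by
  intro x s
  induction x using Completion.induction_on with
  | hp => exact isClosed_le (by fun_prop) (by fun_prop)
  | ih a => simpa only [Completion.inner_coe, Completion.norm_coe] using hf a s

end IsBesselWith

namespace IsFrameWith

-- A nonsummable series has `tsum` zero, which the lower bound excludes for `x ≠ 0`.
theorem of_tsum_bounds (hA : 0 < A) (hAB : A ≤ B)
    (h : ∀ x : E, A * ‖x‖ ^ 2 ≤ ∑' i, ‖⟪f i, x⟫_𝕜‖ ^ 2 ∧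
      ∑' i, ‖⟪f i, x⟫_𝕜‖ ^ 2 ≤ B * ‖x‖ ^ 2) :
    IsFrameWith 𝕜 A B f where
  pos := hA
  le := hAB
  lower x := (h x).1
  isBesselWith x s := by
    rcases eq_or_ne x 0 with rfl | hx
    · simp
    have hsum : Summable fun i => ‖⟪f i, x⟫_𝕜‖ ^ 2 := by
      by_contra hns
      have lower := (h x).1
      rw [tsum_eq_zero_of_not_summable hns] at lower
      have : 0 < A * ‖x‖ ^ 2 := by positivity
      linarith
    exact (hsum.sum_le_tsum s fun i _ => sq_nonneg _).trans (h x).2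

theorem completion (hf : IsFrameWith 𝕜 A B f) :
    IsFrameWith 𝕜 A B fun i => (f i : Completion E) where
  pos := hf.pos
  le := hf.le
  lower x := by
    rw [← hf.isBesselWith.completion.norm_analysis_sq]
    induction x using Completion.induction_on with
    | hp => exact isClosed_le (by fun_prop) (by fun_prop)
    | ih a =>
      simpa only [IsBesselWith.norm_analysis_sq, Completion.inner_coe, Completion.norm_coe]
        using hf.lower a
  isBesselWith := hf.isBesselWith.completion

theorem eq_zero_of_forall_inner_eq_zero (hf : IsFrameWith 𝕜 A B f) {x : E}
    (hx : ∀ i, ⟪f i, x⟫_𝕜 = 0) : x = 0 := by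
  by_contra hne
  have hpos : 0 < A * ‖x‖ ^ 2 := mul_pos hf.pos (by positivity)
  have := hf.lower x
  simp only [hx, norm_zero, ne_eq, OfNat.ofNat_ne_zero, not_false_eq_true, zero_pow,
    tsum_zero] at this
  linarith

theorem dense_span [CompleteSpace E] (hf : IsFrameWith 𝕜 A B f) :
    Dense (Submodule.span 𝕜 (Set.range f) : Set E) := by
  rw [Submodule.dense_iff_topologicalClosure_eq_top, Submodule.topologicalClosure_eq_top_iff,
    Submodule.eq_bot_iff]
  exact fun x hx => hf.eq_zero_of_forall_inner_eq_zero fun i =>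
    hx _ (Submodule.subset_span ⟨i, rfl⟩)

theorem le_norm_linearCombination_sq_of_inner_eq (hf : IsFrameWith 𝕜 A B f) {c : ι →₀ 𝕜} {x : E}
    (hx : ∀ i, ⟪f i, x⟫_𝕜 = c i) :
    A * ∑ i ∈ c.support, ‖c i‖ ^ 2 ≤ ‖Finsupp.linearCombination 𝕜 f c‖ ^ 2 := by
  set q := ∑ i ∈ c.support, ‖c i‖ ^ 2
  set y := Finsupp.linearCombination 𝕜 f c
  have lower : A * ‖x‖ ^ 2 ≤ q := by
    have := hf.lower x
    simp only [hx] at this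
    rwa [tsum_eq_sum (s := c.support) fun i hi => by simp [Finsupp.notMem_support_iff.1 hi]] at this
  have inner_eq : ⟪y, x⟫_𝕜 = (q : 𝕜) := by
    rw [inner_linearCombination_left]
    simp [hx, q, RCLike.conj_mul]
  have hq : 0 ≤ q := by positivity
  have q_le : q ≤ ‖y‖ * ‖x‖ := by
    simpa [inner_eq, abs_of_nonneg hq] using norm_inner_le_norm (𝕜 := 𝕜) y x
  have : (A * q) * q ≤ ‖y‖ ^ 2 * q := by
    have hA := hf.pos.le
    calc (A * q) * q = A * q ^ 2 := by ring
      _ ≤ A * (‖y‖ * ‖x‖) ^ 2 := by gcongr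
      _ = ‖y‖ ^ 2 * (A * ‖x‖ ^ 2) := by ring
      _ ≤ ‖y‖ ^ 2 * q := by gcongr
  rcases hq.eq_or_lt with hq | hq
  · rw [← hq, mul_zero]
    positivity
  · exact le_of_mul_le_mul_right this hq

theorem exists_inner_eq_of_linearIndependent (hf : IsFrameWith 𝕜 A B f) {s : Finset ι} {g : s → E}
    (hg : LinearIndependent 𝕜 g) (hfg : ∀ i ∉ s, ∀ j, ⟪f i, g j⟫_𝕜 = 0)
    {c : ι → 𝕜} (hc : ∀ i ∉ s, c i = 0) : ∃ x, ∀ i, ⟪f i, x⟫_𝕜 = c i := by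
  let G : (s → 𝕜) →ₗ[𝕜] E := Fintype.linearCombination 𝕜 g
  let T : E →ₗ[𝕜] (s → 𝕜) := LinearMap.pi fun i => (innerSL 𝕜 (f i)).toLinearMap
  have inner_G (d : s → 𝕜) {i : ι} (hi : i ∉ s) : ⟪f i, G d⟫_𝕜 = 0 := by
    simp [G, Fintype.linearCombination_apply, inner_sum, inner_smul_right, hfg i hi]
  have injective : Function.Injective (T ∘ₗ G) := by
    rw [injective_iff_map_eq_zero]
    intro d hd
    have hGd : G d = 0 := hf.eq_zero_of_forall_inner_eq_zero fun i => by
      by_cases hi : i ∈ s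
      · exact congrFun hd ⟨i, hi⟩
      · exact inner_G d hi
    exact (injective_iff_map_eq_zero _).1 hg.fintypeLinearCombination_injective d hGd
  obtain ⟨d, hd⟩ := LinearMap.injective_iff_surjective.1 injective fun i => c i
  refine ⟨G d, fun i => ?_⟩
  by_cases hi : i ∈ s
  · exact congrFun hd ⟨i, hi⟩
  · rw [inner_G d hi, hc i hi]

end IsFrameWith

theorem IsMinimalFamily.exists_biorthogonal [CompleteSpace E] (hf : IsMinimalFamily 𝕜 f) :
    ∃ g : ι → E, ∀ i j, ⟪f i, g j⟫_𝕜 = if i = j then 1 else 0 := by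
  have exists_dual (j : ι) : ∃ g : E, ∀ i, ⟪f i, g⟫_𝕜 = if i = j then 1 else 0 := by
    set W := Submodule.span 𝕜 (f '' {j}ᶜ)
    have hj : f j ∉ Wᗮᗮ := by
      rw [Submodule.orthogonal_orthogonal_eq_closure]
      exact hf j
    obtain ⟨y, hy, hjy⟩ : ∃ y ∈ Wᗮ, ⟪f j, y⟫_𝕜 ≠ 0 := by
      simpa [Submodule.mem_orthogonal'] using hj
    refine ⟨(⟪f j, y⟫_𝕜)⁻¹ • y, fun i => ?_⟩
    rw [inner_smul_right]
    split_ifs with hij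
    · rw [hij, inv_mul_cancel₀ hjy]
    · rw [hy _ (Submodule.subset_span ⟨i, hij, rfl⟩), mul_zero]
  choose g hg using exists_dual
  exact ⟨g, fun i j => hg j i⟩

theorem linearIndependent_of_biorthogonal {g : ι → E}
    (hfg : ∀ i j, ⟪f i, g j⟫_𝕜 = if i = j then 1 else 0) : LinearIndependent 𝕜 g := by
  rw [linearIndependent_iff]
  intro c hc
  ext i
  simpa [Finsupp.linearCombination_apply, Finsupp.sum, inner_sum, inner_smul_right, hfg]
    using congrArg (inner 𝕜 (f i)) hc

namespace IsWovenWith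

theorem completion (hw : IsWovenWith 𝕜 A B φ ψ) :
    IsWovenWith 𝕜 A B (fun i => (φ i : Completion E)) fun i => (ψ i : Completion E) := by
  intro σ
  convert (hw σ).completion using 1
  funext i
  exact (apply_ite ((↑) : E → Completion E) (i ∈ σ) (φ i) (ψ i)).symm

theorem le_norm_linearCombination_sq [CompleteSpace E] (hw : IsWovenWith 𝕜 A B φ ψ)
    (hφ : IsMinimalFamily 𝕜 φ) (c : ι →₀ 𝕜) :
    A * ∑ i ∈ c.support, ‖c i‖ ^ 2 ≤ ‖Finsupp.linearCombination 𝕜 ψ c‖ ^ 2 := by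
  obtain ⟨g, hg⟩ := hφ.exists_biorthogonal
  obtain ⟨f, hf, hfψ, hfφ⟩ : ∃ f, IsFrameWith 𝕜 A B f ∧ (∀ i ∈ c.support, f i = ψ i) ∧
      ∀ i ∉ c.support, f i = φ i :=
    ⟨_, hw (c.support : Set ι)ᶜ, fun i hi => if_neg (not_not.2 hi), fun i hi => if_pos hi⟩
  obtain ⟨x, hx⟩ : ∃ x, ∀ i, ⟪f i, x⟫_𝕜 = c i := by
    refine hf.exists_inner_eq_of_linearIndependent (s := c.support) (g := fun j => g j)
      ((linearIndependent_of_biorthogonal hg).comp _ Subtype.val_injective) (fun i hi j => ?_)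
      fun i => Finsupp.notMem_support_iff.1
    rw [hfφ i hi, hg, if_neg (ne_of_mem_of_not_mem j.2 hi).symm]
  have combination_eq : Finsupp.linearCombination 𝕜 f c = Finsupp.linearCombination 𝕜 ψ c :=
    Finset.sum_congr rfl fun i hi => by simp only [hfψ i hi]
  rw [← combination_eq]
  exact hf.le_norm_linearCombination_sq_of_inner_eq hx

theorem isRieszBasisWith [CompleteSpace E] (hw : IsWovenWith 𝕜 A B φ ψ)
    (hφ : IsMinimalFamily 𝕜 φ) : IsRieszBasisWith 𝕜 A B ψ := by
  have hψ : IsFrameWith 𝕜 A B ψ := by simpa using hw ∅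
  exact ⟨hψ.pos, hψ.le, hw.le_norm_linearCombination_sq hφ,
    hψ.isBesselWith.norm_linearCombination_sq_le (hψ.pos.le.trans hψ.le), hψ.dense_span⟩

end IsWovenWith

theorem IsRieszBasisWith.of_completion (hf : IsRieszBasisWith 𝕜 A B fun i => (f i : Completion E)) :
    IsRieszBasisWith 𝕜 A B f := by
  let j : E →ₗᵢ[𝕜] Completion E := Completion.toComplₗᵢ
  have norm_eq (c : ι →₀ 𝕜) : ‖Finsupp.linearCombination 𝕜 (fun i => (f i : Completion E)) c‖ =
      ‖Finsupp.linearCombination 𝕜 f c‖ := by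
    rw [← j.norm_map, ← LinearIsometry.coe_toLinearMap, Finsupp.apply_linearCombination]
    rfl
  refine ⟨hf.pos, hf.le, fun c => norm_eq c ▸ hf.lower c, fun c => norm_eq c ▸ hf.upper c, ?_⟩
  have image_span : j '' (Submodule.span 𝕜 (Set.range f) : Set E) =
      Submodule.span 𝕜 (Set.range fun i => (f i : Completion E)) := by
    rw [← LinearIsometry.coe_toLinearMap, ← Submodule.map_coe, Submodule.map_span,
      ← Set.range_comp]
    rfl
  rw [j.isometry.isUniformInducing.isInducing.dense_iff, image_span]
  exact fun x => hf.dense_span _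

theorem stmt_10_general (hφ : IsMinimalFamily 𝕜 φ) (hw : IsWovenWith 𝕜 A B φ ψ) :
    IsRieszBasisWith 𝕜 A B ψ := by
  let j : E →ₗᵢ[𝕜] Completion E := Completion.toComplₗᵢ
  have coe_minimal : IsMinimalFamily 𝕜 fun i => (φ i : Completion E) :=
    hφ.map_of_isInducing (j := j.toLinearMap) j.isometry.isUniformInducing.isInducing
  exact (hw.completion.isRieszBasisWith coe_minimal).of_completion

end Woven

/-- If `Φ` is a Riesz basis, `Ψ` is a frame, and `Φ` and `Ψ` are woven, then `Ψ`
must in fact be a Riesz basis. -/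
theorem stmt_10 {H : Type*} [NormedAddCommGroup H] [InnerProductSpace ℝ H]
    (φ ψ : ℕ → H)
    (hφRiesz : ∃ A' B' : ℝ, 0 < A' ∧ A' ≤ B' ∧ ∀ c : ℕ →₀ ℝ,
      A' * (∑ i ∈ c.support, (c i) ^ 2) ≤ ‖∑ i ∈ c.support, c i • φ i‖ ^ 2 ∧
      ‖∑ i ∈ c.support, c i • φ i‖ ^ 2 ≤ B' * (∑ i ∈ c.support, (c i) ^ 2))
    (hφdense : Dense (Submodule.span ℝ (Set.range φ) : Set H))
    (hψframe : ∃ A B : ℝ, 0 < A ∧ A ≤ B ∧ ∀ x : H,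
      A * ‖x‖ ^ 2 ≤ (∑' i : ℕ, ⟪x, ψ i⟫ ^ 2) ∧ (∑' i : ℕ, ⟪x, ψ i⟫ ^ 2) ≤ B * ‖x‖ ^ 2)
    (hwoven : ∃ A B : ℝ, 0 < A ∧ A ≤ B ∧ ∀ σ : Set ℕ, ∀ x : H,
      A * ‖x‖ ^ 2 ≤ (∑' i : ℕ, ⟪x, if i ∈ σ then φ i else ψ i⟫ ^ 2) ∧
      (∑' i : ℕ, ⟪x, if i ∈ σ then φ i else ψ i⟫ ^ 2) ≤ B * ‖x‖ ^ 2) :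
    (∃ C D : ℝ, 0 < C ∧ C ≤ D ∧ ∀ c : ℕ →₀ ℝ,
      C * (∑ i ∈ c.support, (c i) ^ 2) ≤ ‖∑ i ∈ c.support, c i • ψ i‖ ^ 2 ∧
      ‖∑ i ∈ c.support, c i • ψ i‖ ^ 2 ≤ D * (∑ i ∈ c.support, (c i) ^ 2)) ∧
    Dense (Submodule.span ℝ (Set.range ψ) : Set H) := by
  obtain ⟨A', B', hA', -, hφ⟩ := hφRiesz
  obtain ⟨A, B, hA, hAB, hw⟩ := hwoven
  have φ_minimal : IsMinimalFamily ℝ φ :=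
    isMinimalFamily_of_le_norm_linearCombination_sq hA' fun c => by
      simpa [Finsupp.linearCombination_apply, Finsupp.sum] using (hφ c).1
  have woven : IsWovenWith ℝ A B φ ψ := fun σ => .of_tsum_bounds hA hAB fun x => by
    simpa [real_inner_comm, Set.piecewise] using hw σ x
  have ψ_riesz := stmt_10_general φ_minimal woven
  refine ⟨⟨A, B, hA, hAB, fun c => ?_⟩, ψ_riesz.dense_span⟩
  simpa [Finsupp.linearCombination_apply, Finsupp.sum] using
    And.intro (ψ_riesz.lower c) (ψ_riesz.upper c)
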